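/- Fix S > 0 and an integer k ≥ 1. For M ≥ 2 define c_M = √(2S log M) − S and A_M(x) = exp(−2kM(1 − Φ(x/√S))) for x ≥ c_M, A_M(x) = 0 for x < c_M. Then for every θ₁ > 0 and θ₂ > 0 there exist constants c₁, c₂ > 0 such that for all M ≥ 2 and all w > 0, sup_{x∈ℝ} (A_M(x + w) − A_M(x)) ≤ c₁ M^{θ₁} w + c₂ M^{−θ₂}. -/

import Mathlib

open MeasureTheory ProbabilityTheory Set

/-- The standard normal distribution function `Φ`. -/
noncomputable def stdNormalCDF (x : ℝ) : ℝ :=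
  ((gaussianReal 0 1) (Set.Iic x)).toReal

/-- The accompanying law with parameters `S > 0`, `k ≥ 1`:
`A_M(x) = exp(−2kM(1−Φ(x/√S)))` for `x ≥ c_M = √(2S log M) − S`, `A_M(x) = 0` otherwise. -/
noncomputable def accLawGen (S : ℝ) (k M : ℕ) (x : ℝ) : ℝ :=
  if x < Real.sqrt (2 * S * Real.log M) - S then 0
  else Real.exp (-(2 * (k : ℝ) * (M : ℝ) * (1 - stdNormalCDF (x / Real.sqrt S))))

lemma aux_diff (a b : ℝ) (hab : a ≤ b) :
    stdNormalCDF b - stdNormalCDF a = ∫ y in Set.Ioc a b, gaussianPDFReal 0 1 y := by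
  have h1 : ((gaussianReal 0 1) (Set.Ioc a b)).toReal
      = ∫ y in Set.Ioc a b, gaussianPDFReal 0 1 y := by
    rw [gaussianReal_apply_eq_integral 0 one_ne_zero, ENNReal.toReal_ofReal]
    exact integral_nonneg fun y => gaussianPDFReal_nonneg 0 1 y
  rw [← h1]
  have h2 : (gaussianReal 0 1) (Set.Iic b)
      = (gaussianReal 0 1) (Set.Iic a) + (gaussianReal 0 1) (Set.Ioc a b) := by
    rw [← measure_union _ measurableSet_Ioc, Set.Iic_union_Ioc_eq_Iic hab]
    exact Set.Iic_disjoint_Ioc le_rfl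
  unfold stdNormalCDF
  rw [h2, ENNReal.toReal_add (measure_ne_top _ _) (measure_ne_top _ _)]
  ring

lemma aux_upper (a b C : ℝ) (hab : a ≤ b)
    (hC : ∀ y, a < y → y ≤ b → gaussianPDFReal 0 1 y ≤ C) :
    stdNormalCDF b - stdNormalCDF a ≤ C * (b - a) := by
  rw [aux_diff a b hab]
  have := setIntegral_mono_on (μ := volume) (s := Set.Ioc a b) (f := gaussianPDFReal 0 1)
    (g := fun _ => C) (integrable_gaussianPDFReal 0 1).integrableOn
    (by simp) measurableSet_Ioc (fun y hy => hC y hy.1 hy.2)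
  refine this.trans (le_of_eq ?_)
  simp [hab, mul_comm]

lemma aux_lower (a b C : ℝ) (hab : a ≤ b)
    (hC : ∀ y, a < y → y ≤ b → C ≤ gaussianPDFReal 0 1 y) :
    C * (b - a) ≤ stdNormalCDF b - stdNormalCDF a := by
  rw [aux_diff a b hab]
  have := setIntegral_mono_on (μ := volume) (s := Set.Ioc a b) (g := gaussianPDFReal 0 1)
    (f := fun _ => C) (by simp) (integrable_gaussianPDFReal 0 1).integrableOn
    measurableSet_Ioc (fun y hy => hC y hy.1 hy.2)
  refine le_trans (le_of_eq ?_) this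
  simp [hab, mul_comm]

lemma aux_le_one (a : ℝ) : stdNormalCDF a ≤ 1 := by
  unfold stdNormalCDF
  exact measureReal_le_one

lemma aux_exp (p q : ℝ) (hp : 0 ≤ p) (hpq : p ≤ q) :
    Real.exp (-p) - Real.exp (-q) ≤ q - p := by
  have h1 : Real.exp (-q) = Real.exp (-p) * Real.exp (-(q - p)) := by
    rw [← Real.exp_add]; congr 1; ring
  have h2 : Real.exp (-p) ≤ 1 := Real.exp_le_one_iff.2 (by linarith)
  have h3 := Real.add_one_le_exp (-(q - p))
  have h4 := Real.exp_pos (-p)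
  rw [h1]
  nlinarith

lemma aux_pdf (y : ℝ) : gaussianPDFReal 0 1 y = (Real.sqrt (2 * Real.pi))⁻¹ * Real.exp (-(y ^ 2 / 2)) := by
  simp [gaussianPDFReal]
  ring_nf
  simp

/-- The smooth part is Lipschitz to the right of the cut. -/
lemma aux_lip (s b w u v K M : ℝ) (hs : 0 < s) (hb : 0 ≤ b) (hM : M = Real.exp (b ^ 2 / 2))
    (hK : 0 ≤ K) (hu : b - s ≤ u) (huv : u ≤ v) (hw : v - u ≤ w / s) :
    Real.exp (-(K * M * (1 - stdNormalCDF v))) - Real.exp (-(K * M * (1 - stdNormalCDF u)))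
      ≤ K * Real.exp (s * b) * (w / s) := by
  have hMp : 0 < M := hM ▸ Real.exp_pos _
  have hup := aux_upper u v (Real.exp (s * b) / M) huv (fun y hy _ => by
    have h0 : (Real.sqrt (2 * Real.pi))⁻¹ ≤ 1 := by
      apply inv_le_one_of_one_le₀
      rw [Real.one_le_sqrt]
      nlinarith [Real.pi_gt_three]
    rw [aux_pdf, hM, ← Real.exp_sub]
    have h1 : Real.exp (-(y ^ 2 / 2)) ≤ Real.exp (s * b - b ^ 2 / 2) := by
      apply Real.exp_le_exp.2
      rcases le_total b (2 * s) with h | h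
      · nlinarith [sq_nonneg y]
      · nlinarith [mul_self_nonneg s]
    nlinarith [Real.exp_pos (-(y ^ 2 / 2))])
  have hmono : stdNormalCDF u ≤ stdNormalCDF v := by
    have := aux_lower u v 0 huv (fun y _ _ => gaussianPDFReal_nonneg 0 1 y)
    linarith
  have hv1 := aux_le_one v
  have hKM : 0 ≤ K * M := by positivity
  refine (aux_exp _ _ (mul_nonneg hKM (by linarith)) (by nlinarith)).trans ?_
  have e : K * M * (1 - stdNormalCDF u) - K * M * (1 - stdNormalCDF v)
    = K * M * (stdNormalCDF v - stdNormalCDF u) := by ring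
  rw [e]
  calc K * M * (stdNormalCDF v - stdNormalCDF u)
      ≤ K * M * (Real.exp (s * b) / M * (v - u)) := mul_le_mul_of_nonneg_left hup hKM
    _ = K * Real.exp (s * b) * (v - u) := by field_simp
    _ ≤ _ := mul_le_mul_of_nonneg_left hw (by positivity)

/-- Size of the jump at the cut. -/
lemma aux_jump (s b K M θ D : ℝ) (hs : 0 < s) (hb : 0 ≤ b) (hM : M = Real.exp (b ^ 2 / 2))
    (hK : 0 < K) (hθ : 0 < θ)
    (hD : D = K * (Real.sqrt (2 * Real.pi))⁻¹ * Real.exp (-s ^ 2) * (s / 2) * (s ^ 3 / 48)) :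
    Real.exp (-(K * M * (1 - stdNormalCDF (b - s))))
      ≤ Real.exp ((θ / 2) ^ 3 / D ^ 2) * Real.exp (-(θ * (b ^ 2 / 2))) := by
  have hMp : 0 < M := hM ▸ Real.exp_pos _
  have hr : 0 < (Real.sqrt (2 * Real.pi))⁻¹ := by positivity
  set r := (Real.sqrt (2 * Real.pi))⁻¹ with hrdef
  have hDp : 0 < D := by rw [hD]; positivity
  have hlow := aux_lower (b - s) (b - s / 2) (r * (Real.exp (s * b / 2) * Real.exp (-s ^ 2) / M))
    (by linarith) (fun y hy1 hy2 => by
      rw [aux_pdf, hM, ← Real.exp_add, ← Real.exp_sub]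
      refine mul_le_mul_of_nonneg_left (Real.exp_le_exp.2 ?_) hr.le
      nlinarith [mul_nonneg (sub_nonneg.2 hy1.le) (sub_nonneg.2 hy2), mul_pos hs hs,
        mul_nonneg hs.le hb])
  have h1 := aux_le_one (b - s / 2)
  have h2 : K * M * ((r * (Real.exp (s * b / 2) * Real.exp (-s ^ 2) / M)) * (s / 2))
      ≤ K * M * (1 - stdNormalCDF (b - s)) := by
    apply mul_le_mul_of_nonneg_left _ (by positivity)
    have : b - s / 2 - (b - s) = s / 2 := by ring
    rw [this] at hlow
    linarith
  have h3 : K * M * ((r * (Real.exp (s * b / 2) * Real.exp (-s ^ 2) / M)) * (s / 2))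
      = K * r * Real.exp (-s ^ 2) * (s / 2) * Real.exp (s * b / 2) := by
    field_simp
  have h4 : (s * b / 2) ^ 3 / 6 ≤ Real.exp (s * b / 2) := by
    have := Real.pow_div_factorial_le_exp (s * b / 2) (by positivity) 3
    simpa [Nat.factorial] using this
  have h5 : D * b ^ 3 ≤ K * r * Real.exp (-s ^ 2) * (s / 2) * Real.exp (s * b / 2) := by
    calc D * b ^ 3 = K * r * Real.exp (-s ^ 2) * (s / 2) * ((s * b / 2) ^ 3 / 6) := by
          rw [hD]; ring
      _ ≤ _ := mul_le_mul_of_nonneg_left h4 (by positivity)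
  have h6 : θ / 2 * b ^ 2 ≤ D * b ^ 3 + (θ / 2) ^ 3 / D ^ 2 := by
    rcases le_total (θ / 2) (D * b) with h | h
    · have : 0 ≤ (θ / 2) ^ 3 / D ^ 2 := by positivity
      nlinarith [mul_le_mul_of_nonneg_right h (sq_nonneg b)]
    · have h7 : θ / 2 * b ^ 2 ≤ (θ / 2) ^ 3 / D ^ 2 := by
        rw [le_div_iff₀ (by positivity)]
        have : (D * b) ^ 2 ≤ (θ / 2) ^ 2 := pow_le_pow_left₀ (by positivity) h 2
        nlinarith
      have : 0 ≤ D * b ^ 3 := by positivity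
      linarith
  rw [← Real.exp_add]
  apply Real.exp_le_exp.2
  linarith

/-- technical Lemma T. For every `θ₁, θ₂ > 0` there exist
`c₁, c₂ > 0` such that for all `M ≥ 2` and `w > 0`,
`sup_{x∈ℝ} (A_M(x+w) − A_M(x)) ≤ c₁ M^{θ₁} w + c₂ M^{−θ₂}`. -/
theorem statement15
    (S : ℝ) (hS : 0 < S) (k : ℕ) (hk : 1 ≤ k) (θ₁ θ₂ : ℝ)
    (hθ₁ : 0 < θ₁) (hθ₂ : 0 < θ₂) :
    ∃ c₁ > (0:ℝ), ∃ c₂ > (0:ℝ), ∀ M : ℕ, 2 ≤ M → ∀ w : ℝ, 0 < w → ∀ x : ℝ,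
      accLawGen S k M (x + w) - accLawGen S k M x
        ≤ c₁ * (M : ℝ) ^ θ₁ * w + c₂ * (M : ℝ) ^ (-θ₂) := by
  obtain ⟨s, hs, rfl⟩ : ∃ s : ℝ, 0 < s ∧ S = s ^ 2 :=
    ⟨Real.sqrt S, Real.sqrt_pos.2 hS, (Real.sq_sqrt hS.le).symm⟩
  have hkp : (0:ℝ) < 2 * (k : ℝ) := by
    have : (1:ℝ) ≤ k := by exact_mod_cast hk
    linarith
  refine ⟨2 * (k : ℝ) * Real.exp (s ^ 2 / (2 * θ₁)) / s, by positivity,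
    Real.exp ((θ₂ / 2) ^ 3 / (2 * (k : ℝ) * (Real.sqrt (2 * Real.pi))⁻¹ * Real.exp (-s ^ 2)
      * (s / 2) * (s ^ 3 / 48)) ^ 2), Real.exp_pos _, ?_⟩
  intro M hM w hw x
  have hM1 : (1:ℝ) < M := by exact_mod_cast hM
  have hM0 : (0:ℝ) < M := by linarith
  have hlog : 0 < Real.log M := Real.log_pos hM1
  set b := Real.sqrt (2 * Real.log M) with hbdef
  have hb : 0 ≤ b := Real.sqrt_nonneg _
  have hb2 : b ^ 2 = 2 * Real.log M := Real.sq_sqrt (by linarith)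
  have hMb : (M : ℝ) = Real.exp (b ^ 2 / 2) := by
    rw [hb2, mul_div_cancel_left₀ _ two_ne_zero, Real.exp_log hM0]
  have hc : Real.sqrt (2 * s ^ 2 * Real.log M) - s ^ 2 = s * (b - s) := by
    have : 2 * s ^ 2 * Real.log M = s ^ 2 * (2 * Real.log M) := by ring
    rw [this, Real.sqrt_mul (by positivity), Real.sqrt_sq hs.le]
    ring
  have hpow (t : ℝ) : (M : ℝ) ^ t = Real.exp (t * (b ^ 2 / 2)) := by
    rw [Real.rpow_def_of_pos hM0, hb2]; congr 1; ring
  have hlast : 2 * (k : ℝ) * Real.exp (s * b) * (w / s)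
      ≤ 2 * (k : ℝ) * Real.exp (s ^ 2 / (2 * θ₁)) / s * (M : ℝ) ^ θ₁ * w := by
    have h1 : Real.exp (s * b) ≤ Real.exp (s ^ 2 / (2 * θ₁)) * (M : ℝ) ^ θ₁ := by
      rw [hpow, ← Real.exp_add]
      apply Real.exp_le_exp.2
      have : s ^ 2 / (2 * θ₁) + θ₁ * (b ^ 2 / 2) - s * b = (s - θ₁ * b) ^ 2 / (2 * θ₁) := by
        field_simp; ring
      have : 0 ≤ (s - θ₁ * b) ^ 2 / (2 * θ₁) := by positivity
      linarith
    calc _ ≤ 2 * (k : ℝ) * (Real.exp (s ^ 2 / (2 * θ₁)) * (M : ℝ) ^ θ₁) * (w / s) := by gcongr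
      _ = _ := by ring
  have hjump := aux_jump s b (2 * (k : ℝ)) M θ₂ _ hs hb hMb hkp hθ₂ rfl
  rw [← neg_mul θ₂, ← hpow] at hjump
  unfold accLawGen
  rw [hc, Real.sqrt_sq hs.le]
  have hR1 : 0 ≤ 2 * (k : ℝ) * Real.exp (s ^ 2 / (2 * θ₁)) / s * (M : ℝ) ^ θ₁ * w := by
    positivity
  have hR2 := (Real.exp_pos _).le.trans hjump
  by_cases h1 : x + w < s * (b - s)
  · rw [if_pos h1, if_pos (by linarith)]
    linarith
  · rw [if_neg h1]
    have h1' : s * (b - s) ≤ x + w := not_lt.1 h1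
    by_cases h2 : x < s * (b - s)
    · rw [if_pos h2]
      have := aux_lip s b w (b - s) ((x + w) / s) (2 * (k : ℝ)) M hs hb hMb hkp.le le_rfl
        (by rw [le_div_iff₀ hs]; linarith)
        (by
          rw [sub_le_iff_le_add, div_le_iff₀ hs, add_mul, div_mul_cancel₀ _ hs.ne']
          linarith)
      linarith
    · rw [if_neg h2]
      have := aux_lip s b w (x / s) ((x + w) / s) (2 * (k : ℝ)) M hs hb hMb hkp.le
        (by rw [le_div_iff₀ hs]; linarith)
        (by gcongr; linarith)
        (by apply le_of_eq; ring)
      linarith
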